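/- arXiv:1801.01625 — 3 statements merged into one kernel-verified Lean document; each statement's English description precedes it below -/
import Mathlib

section
/- Fix an index k and fix α_j ∈ [0,1] for all j ≠ k. Let f(t) denote SNR of the vector α with its k-th coordinate replaced by t, and let D(t) = ∑_{j≠k} s_j/(1 + α_j · L · s_j) + s_k/(1 + t · L · s_k) + M. Then for every t ∈ [0,1], f has derivative at t equal to L · (s_k)² · ( f(t) − (t² · L · s_k + 2t − 1) ) / ( D(t) · (1 + t · L · s_k)² ). -/
/-- Non-coherent combined SNR of the uplink JR-CoMP network:
`L` is the number of symbols per channel coherence interval, `s m` the per-BS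
received SNR, `α m` the pilot-symbol ratio at BS `m`. -/
noncomputable def SNR (L : ℝ) {M : ℕ} (s α : Fin M → ℝ) : ℝ :=
  (∑ m, (1 - α m) * s m * (α m * L * s m) / (1 + α m * L * s m)) /
  (∑ m, s m / (1 + α m * L * s m) + M)

/-!
Write the SNR as `N / D`. In each coordinate the numerator and the denominator have proportional
derivatives, `∂ₖN = (αₖ² L sₖ + 2 αₖ - 1) ∂ₖD`, so the quotient rule collapses to
`∂ₖ(N / D) = -∂ₖD (N / D - (αₖ² L sₖ + 2 αₖ - 1)) / D`, and `∂ₖD = -L sₖ² / (1 + αₖ L sₖ)²`.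
-/

section Calculus

variable {𝕜 : Type*} [NontriviallyNormedField 𝕜]

theorem hasDerivAt_sum_update {ι E : Type*} [Fintype ι] [DecidableEq ι] [NormedAddCommGroup E]
    [NormedSpace 𝕜 E] {F : ι → 𝕜 → E} {k : ι} {F' : E} {t : 𝕜} (hF : HasDerivAt (F k) F' t)
    (α : ι → 𝕜) :
    HasDerivAt (fun u => ∑ m, F m (Function.update α k u m)) F' t := by
  simp only [Function.apply_update F, Finset.sum_update_of_mem (Finset.mem_univ k)]
  exact hF.add_const _

theorem hasDerivAt_div_of_proportional {f g : 𝕜 → 𝕜} {r g' t : 𝕜}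
    (hf : HasDerivAt f (r * g') t) (hg : HasDerivAt g g' t) (ht : g t ≠ 0) :
    HasDerivAt (fun u => f u / g u) (-g' * (f t / g t - r) / g t) t := by
  refine (hf.fun_div hg ht).congr_deriv ?_
  field_simp
  ring

theorem hasDerivAt_one_add_mul_mul (L c t : 𝕜) :
    HasDerivAt (fun u => 1 + u * L * c) (L * c) t := by
  simpa only [one_mul] using (((hasDerivAt_id' t).mul_const L).mul_const c).const_add 1

theorem hasDerivAt_div_one_add_mul_mul {L c t : 𝕜} (ht : 1 + t * L * c ≠ 0) :
    HasDerivAt (fun u => c / (1 + u * L * c)) (-(L * c ^ 2) / (1 + t * L * c) ^ 2) t := by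
  refine ((hasDerivAt_const t c).fun_div (hasDerivAt_one_add_mul_mul L c t) ht).congr_deriv ?_
  ring

theorem hasDerivAt_one_sub_mul_div_one_add_mul_mul {L c t : 𝕜} (ht : 1 + t * L * c ≠ 0) :
    HasDerivAt (fun u => (1 - u) * c * (u * L * c) / (1 + u * L * c))
      ((t ^ 2 * L * c + 2 * t - 1) * (-(L * c ^ 2) / (1 + t * L * c) ^ 2)) t := by
  have hpilot : HasDerivAt (fun u => u * L * c) (1 * L * c) t :=
    ((hasDerivAt_id' t).mul_const L).mul_const c
  have hdata : HasDerivAt (fun u => (1 - u) * c) (-1 * c) t :=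
    ((hasDerivAt_id' t).const_sub 1).mul_const c
  refine ((hdata.fun_mul hpilot).fun_div (hasDerivAt_one_add_mul_mul L c t) ht).congr_deriv ?_
  ring

end Calculus

/-- The numerator of `SNR`: the useful signal power after channel estimation, summed over the
base stations. -/
noncomputable def signalPower (L : ℝ) {M : ℕ} (s α : Fin M → ℝ) : ℝ :=
  ∑ m, (1 - α m) * s m * (α m * L * s m) / (1 + α m * L * s m)

/-- The denominator of `SNR`: the channel-estimation error powers plus a unit receiver noise at
each of the `M` base stations. -/
noncomputable def noisePower (L : ℝ) {M : ℕ} (s α : Fin M → ℝ) : ℝ :=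
  ∑ m, s m / (1 + α m * L * s m) + M

section PilotRatio

variable {L : ℝ} {M : ℕ} {s α : Fin M → ℝ}

theorem SNR_eq_signalPower_div_noisePower (L : ℝ) (s α : Fin M → ℝ) :
    SNR L s α = signalPower L s α / noisePower L s α :=
  rfl

theorem noisePower_update (L : ℝ) (s α : Fin M → ℝ) (k : Fin M) (t : ℝ) :
    noisePower L s (Function.update α k t) =
      ∑ j ∈ Finset.univ.erase k, s j / (1 + α j * L * s j) + s k / (1 + t * L * s k) + M := by
  rw [noisePower, ← Finset.sum_erase_add _ _ (Finset.mem_univ k), Function.update_self]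
  congr 2
  refine Finset.sum_congr rfl fun j hj => ?_
  rw [Function.update_of_ne (Finset.ne_of_mem_erase hj)]

theorem one_add_pilot_pos (hL : 0 ≤ L) (hs : ∀ m, 0 ≤ s m) (hα : ∀ m, 0 ≤ α m) (m : Fin M) :
    0 < 1 + α m * L * s m :=
  add_pos_of_pos_of_nonneg one_pos (mul_nonneg (mul_nonneg (hα m) hL) (hs m))

theorem noisePower_pos (hL : 0 ≤ L) (hM : 0 < M) (hs : ∀ m, 0 ≤ s m) (hα : ∀ m, 0 ≤ α m) :
    0 < noisePower L s α :=
  add_pos_of_nonneg_of_pos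
    (Finset.sum_nonneg fun m _ => div_nonneg (hs m) (one_add_pilot_pos hL hs hα m).le)
    (Nat.cast_pos.2 hM)

theorem hasDerivAt_noisePower_update {k : Fin M} (hk : 1 + α k * L * s k ≠ 0) :
    HasDerivAt (fun u => noisePower L s (Function.update α k u))
      (-(L * s k ^ 2) / (1 + α k * L * s k) ^ 2) (α k) :=
  (hasDerivAt_sum_update (F := fun m x => s m / (1 + x * L * s m))
    (hasDerivAt_div_one_add_mul_mul hk) α).add_const (M : ℝ)

theorem hasDerivAt_signalPower_update {k : Fin M} (hk : 1 + α k * L * s k ≠ 0) :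
    HasDerivAt (fun u => signalPower L s (Function.update α k u))
      ((α k ^ 2 * L * s k + 2 * α k - 1) * (-(L * s k ^ 2) / (1 + α k * L * s k) ^ 2)) (α k) :=
  hasDerivAt_sum_update (F := fun m x => (1 - x) * s m * (x * L * s m) / (1 + x * L * s m))
    (hasDerivAt_one_sub_mul_div_one_add_mul_mul hk) α

theorem SNR_partial_derivative_general (hden : ∀ m, 1 + α m * L * s m ≠ 0)
    (hD : noisePower L s α ≠ 0) (k : Fin M) :
    HasDerivAt (fun u => SNR L s (Function.update α k u))
      (L * s k ^ 2 * (SNR L s α - (α k ^ 2 * L * s k + 2 * α k - 1)) /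
        (noisePower L s α * (1 + α k * L * s k) ^ 2)) (α k) := by
  have hquot := hasDerivAt_div_of_proportional (hasDerivAt_signalPower_update (hden k))
    (hasDerivAt_noisePower_update (hden k)) (by rwa [Function.update_eq_self])
  refine hquot.congr_deriv ?_
  rw [Function.update_eq_self, ← SNR_eq_signalPower_div_noisePower, div_mul_eq_div_div_swap]
  ring

end PilotRatio

/-- Partial derivative of the combined SNR in the `k`-th pilot ratio:
freezing `α j ∈ [0,1]` for `j ≠ k`, the one-variable function
`f t = SNR (Function.update α k t)` has, at every `t ∈ [0,1]`, derivative
`L sₖ² (f t − (t² L sₖ + 2t − 1)) / (D t · (1 + t L sₖ)²)` where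
`D t = ∑_{j≠k} sⱼ/(1+αⱼ L sⱼ) + sₖ/(1+t L sₖ) + M`. -/
theorem SNR_partial_derivative
    (L : ℝ) (hL : 0 < L) (M : ℕ) (hM : 0 < M) (s : Fin M → ℝ) (hs : ∀ m, 0 < s m)
    (α : Fin M → ℝ) (k : Fin M) (hα : ∀ j, j ≠ k → α j ∈ Set.Icc (0 : ℝ) 1) :
    ∀ t ∈ Set.Icc (0 : ℝ) 1,
      HasDerivAt (fun u => SNR L s (Function.update α k u))
        (L * (s k) ^ 2 *
            (SNR L s (Function.update α k t) - (t ^ 2 * L * s k + 2 * t - 1)) /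
          ((∑ j ∈ Finset.univ.erase k, s j / (1 + α j * L * s j)
              + s k / (1 + t * L * s k) + M) * (1 + t * L * s k) ^ 2)) t := by
  rintro t ⟨ht, -⟩
  have hs' : ∀ m, 0 ≤ s m := fun m => (hs m).le
  have hα' : ∀ m, 0 ≤ Function.update α k t m :=
    (Function.forall_update_iff α fun _ x => 0 ≤ x).2 ⟨ht, fun j hj => (hα j hj).1⟩
  simpa only [Function.update_idem, Function.update_self, noisePower_update] using
    SNR_partial_derivative_general (fun m => (one_add_pilot_pos hL.le hs' hα' m).ne')
      (noisePower_pos hL.le hM hs' hα').ne' k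
end

section
/- For M = 1 the combined SNR reduces to the single-variable function f(α) = L·s²·α·(1 − α)/(s + 1 + α·L·s). For any reals L > 0 and s > 0, f is strictly concave on the interval [0, 1]. -/
-- Up to an affine function, `q x / (d + e x)` is `q (-d / e) / (d + e x)`, where
-- `q x = a x² + b x + c`; the factor `a d² - b d e + c e²` is `e² q (-d / e)`.
theorem quadratic_div_affine_combo_sub {K : Type*} [Field K] {a b c d e x y u v : K}
    (huv : u + v = 1) (hx : d + e * x ≠ 0) (hy : d + e * y ≠ 0)
    (hxy : d + e * (u * x + v * y) ≠ 0) :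
    u * ((a * x ^ 2 + b * x + c) / (d + e * x)) + v * ((a * y ^ 2 + b * y + c) / (d + e * y)) -
        (a * (u * x + v * y) ^ 2 + b * (u * x + v * y) + c) / (d + e * (u * x + v * y)) =
      (a * d ^ 2 - b * d * e + c * e ^ 2) * (u * v * (x - y) ^ 2) /
        ((d + e * x) * (d + e * y) * (d + e * (u * x + v * y))) := by
  obtain rfl : v = 1 - u := eq_sub_of_add_eq' huv
  rw [mul_div_assoc', mul_div_assoc', div_add_div _ _ hx hy,
    div_sub_div _ _ (mul_ne_zero hx hy) hxy]
  congr 1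
  ring

theorem strictConcaveOn_quadratic_div_affine {K : Type*} [Field K] [LinearOrder K]
    [IsStrictOrderedRing K] {a b c d e : K} (h : a * d ^ 2 - b * d * e + c * e ^ 2 < 0) :
    StrictConcaveOn K {x | 0 < d + e * x} fun x => (a * x ^ 2 + b * x + c) / (d + e * x) := by
  have hconvex : Convex K {x | 0 < d + e * x} := by
    simpa only [neg_lt_iff_pos_add', smul_eq_mul] using
      convex_halfSpace_gt (IsLinearMap.isLinearMap_smul e) (-d)
  refine ⟨hconvex, ?_⟩
  intro x (hx : 0 < d + e * x) y (hy : 0 < d + e * y) hxy u v hu hv huv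
  have hcombo : 0 < d + e * (u * x + v * y) := hconvex hx hy hu.le hv.le huv
  have hweight : 0 < u * v * (x - y) ^ 2 :=
    mul_pos (mul_pos hu hv) (sq_pos_of_ne_zero (sub_ne_zero.mpr hxy))
  simp only [smul_eq_mul]
  rw [← sub_neg, quadratic_div_affine_combo_sub huv hx.ne' hy.ne' hcombo.ne']
  exact div_neg_of_neg_of_pos (mul_neg_of_neg_of_pos h hweight) (by positivity)

theorem SNR_fin_one {L s α : ℝ} (h : 1 + α * L * s ≠ 0) :
    SNR L (fun _ : Fin 1 => s) (fun _ => α) =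
      L * s ^ 2 * α * (1 - α) / (s + 1 + α * L * s) := by
  have hdenom : s / (1 + α * L * s) + 1 = (s + 1 + α * L * s) / (1 + α * L * s) := by
    rw [div_add_one h, add_assoc]
  simp only [SNR, Fin.sum_univ_one, Nat.cast_one]
  rw [hdenom, div_div_div_cancel_right₀ h]
  ring

theorem single_BS_SNR_strictly_concave_general (L s : ℝ) (hL : 0 < L) (hs : 0 < s) :
    (∀ α, 1 + α * L * s ≠ 0 →
        SNR L (fun _ : Fin 1 => s) (fun _ => α) =
          L * s ^ 2 * α * (1 - α) / (s + 1 + α * L * s)) ∧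
    StrictConcaveOn ℝ {α | 0 < s + 1 + α * L * s}
      (fun α => L * s ^ 2 * α * (1 - α) / (s + 1 + α * L * s)) := by
  refine ⟨fun α => SNR_fin_one, ?_⟩
  have hremainder :
      -(L * s ^ 2) * (s + 1) ^ 2 - L * s ^ 2 * (s + 1) * (L * s) + 0 * (L * s) ^ 2 < 0 := by
    have hfactored : 0 < L * s ^ 2 * (s + 1) * (s + 1 + L * s) := by positivity
    linarith
  have hnum (α : ℝ) : -(L * s ^ 2) * α ^ 2 + L * s ^ 2 * α + 0 = L * s ^ 2 * α * (1 - α) := by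
    ring
  have hdenom (α : ℝ) : s + 1 + L * s * α = s + 1 + α * L * s := by ring
  simpa only [hnum, hdenom] using strictConcaveOn_quadratic_div_affine hremainder

/-- For `M = 1` the combined SNR reduces to
`f α = L s² α (1 − α)/(s + 1 + α L s)`, and this function is strictly concave
on `[0, 1]` for any `L > 0`, `s > 0`. -/
theorem single_BS_SNR_strictly_concave (L s : ℝ) (hL : 0 < L) (hs : 0 < s) :
    (∀ α ∈ Set.Icc (0 : ℝ) 1,
        SNR L (fun _ : Fin 1 => s) (fun _ => α) =
          L * s ^ 2 * α * (1 - α) / (s + 1 + α * L * s)) ∧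
    StrictConcaveOn ℝ (Set.Icc (0 : ℝ) 1)
      (fun α => L * s ^ 2 * α * (1 - α) / (s + 1 + α * L * s)) := by
  obtain ⟨hSNR, hconcave⟩ := single_BS_SNR_strictly_concave_general L s hL hs
  exact ⟨fun α ⟨hα, _⟩ => hSNR α (by positivity),
    hconcave.subset (fun α ⟨hα, _⟩ => show 0 < s + 1 + α * L * s by positivity) (convex_Icc 0 1)⟩
end

section
/- For M = 1, with f(α) = L·s²·α·(1 − α)/(s + 1 + α·L·s) and L > 0, s > 0: there exists a unique α* ∈ [0, 1] at which f attains its maximum over [0, 1]; this α* satisfies 0 < α* < 1 and the first-order condition f(α*) = (α*)²·L·s + 2·α* − 1. -/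
/-!
Up to the factor `L s²`, the SNR is `g x = x (1 - x) / (p + q x)` with `p = s + 1` and `q = L s`.
The numerator of `g'` vanishes at `a` exactly when `q a² = p (1 - 2 a)`, and such an `a` exists in
`(0, 1)` because the difference of the two sides changes sign there. Around it one can complete the
square, `g x = a² / p - (x - a)² / (p + q x)`, which shows that `g` is strictly smaller away
from `a`. The equation for `a` also turns the maximum `L s² a² / p` into `a² L s + 2 a - 1`.
-/

open Set

lemma isMaxOn_iff_eq_of_forall_ne_lt {α β : Type*} [Preorder β] {f : α → β} {S : Set α} {a b : α}
    (ha : a ∈ S) (hb : b ∈ S) (hlt : ∀ x ∈ S, x ≠ a → f x < f a) :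
    IsMaxOn f S b ↔ b = a := by
  constructor
  · intro hmax
    by_contra hne
    exact (hlt b hb hne).not_ge (hmax ha)
  · rintro rfl x hx
    obtain rfl | hne := eq_or_ne x b
    exacts [le_rfl, (hlt x hx hne).le]

/-- The single-station combined SNR at pilot ratio `x`, divided by its constant factor `L s²`.
The SNR and the coherence interval enter through the coefficients `p = s + 1` and `q = L s` of
the denominator. -/
def normalizedSNR {K : Type*} [Field K] (p q x : K) : K := x * (1 - x) / (p + q * x)

lemma exists_stationary_mem_Ioo {p q : ℝ} (hp : 0 < p) (hpq : 0 < p + q) :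
    ∃ a ∈ Ioo (0 : ℝ) 1, q * a ^ 2 = p * (1 - 2 * a) := by
  have hcont : ContinuousOn (fun a : ℝ => q * a ^ 2 - p * (1 - 2 * a)) (Icc 0 1) := by fun_prop
  obtain ⟨a, ha, hzero⟩ := intermediate_value_Ioo zero_le_one hcont
    (show (0 : ℝ) ∈ Ioo _ _ by constructor <;> linarith)
  exact ⟨a, ha, sub_eq_zero.mp hzero⟩

section Stationary

variable {K : Type*} [Field K] {p q a x : K}

lemma normalizedSNR_eq_sub_of_stationary (hp : p ≠ 0) (ha : q * a ^ 2 = p * (1 - 2 * a))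
    (hx : p + q * x ≠ 0) :
    normalizedSNR p q x = a ^ 2 / p - (x - a) ^ 2 / (p + q * x) := by
  rw [normalizedSNR, div_sub_div _ _ hp hx, div_eq_div_iff hx (mul_ne_zero hp hx)]
  linear_combination -(p + q * x) * x * ha

lemma normalizedSNR_self_of_stationary (hp : p ≠ 0) (ha : q * a ^ 2 = p * (1 - 2 * a))
    (hden : p + q * a ≠ 0) : normalizedSNR p q a = a ^ 2 / p := by
  simp [normalizedSNR_eq_sub_of_stationary hp ha hden]

lemma normalizedSNR_lt_of_stationary [LinearOrder K] [IsStrictOrderedRing K] (hp : p ≠ 0)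
    (ha : q * a ^ 2 = p * (1 - 2 * a)) (hden : p + q * a ≠ 0) (hx : 0 < p + q * x)
    (hne : x ≠ a) : normalizedSNR p q x < normalizedSNR p q a := by
  rw [normalizedSNR_self_of_stationary hp ha hden,
    normalizedSNR_eq_sub_of_stationary hp ha hx.ne']
  exact sub_lt_self _ (div_pos (sq_pos_of_ne_zero (sub_ne_zero.mpr hne)) hx)

end Stationary

/-- For a single base station (`M = 1`), `f α = L s² α (1 − α)/(s + 1 + α L s)`
has a unique maximizer `α*` over `[0, 1]`; this maximizer is interior
(`0 < α* < 1`) and satisfies the first-order condition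
`f α* = α*² L s + 2 α* − 1`. -/
theorem single_BS_unique_interior_maximizer (L s : ℝ) (hL : 0 < L) (hs : 0 < s) :
    (∃! a : ℝ, a ∈ Set.Icc (0 : ℝ) 1 ∧
        IsMaxOn (fun α => L * s ^ 2 * α * (1 - α) / (s + 1 + α * L * s))
          (Set.Icc (0 : ℝ) 1) a) ∧
    ∀ a ∈ Set.Icc (0 : ℝ) 1,
      IsMaxOn (fun α => L * s ^ 2 * α * (1 - α) / (s + 1 + α * L * s))
          (Set.Icc (0 : ℝ) 1) a →
        0 < a ∧ a < 1 ∧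
          L * s ^ 2 * a * (1 - a) / (s + 1 + a * L * s) = a ^ 2 * L * s + 2 * a - 1 := by
  have hsnr (x : ℝ) : L * s ^ 2 * x * (1 - x) / (s + 1 + x * L * s) =
      L * s ^ 2 * normalizedSNR (s + 1) (L * s) x := by
    rw [normalizedSNR]; ring
  have hp : 0 < s + 1 := by positivity
  have hden {x : ℝ} (hx : x ∈ Icc (0 : ℝ) 1) : 0 < s + 1 + L * s * x := by
    have := hx.1
    positivity
  obtain ⟨a, ha, hstat⟩ := exists_stationary_mem_Ioo hp (q := L * s) (by positivity)
  have haI : a ∈ Icc (0 : ℝ) 1 := Ioo_subset_Icc_self ha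
  have hmax {b : ℝ} (hb : b ∈ Icc (0 : ℝ) 1) :
      IsMaxOn (fun x => L * s ^ 2 * normalizedSNR (s + 1) (L * s) x) (Icc 0 1) b ↔ b = a :=
    isMaxOn_iff_eq_of_forall_ne_lt haI hb fun x hx hne => mul_lt_mul_of_pos_left
      (normalizedSNR_lt_of_stationary hp.ne' hstat (hden haI).ne' (hden hx) hne)
      (by positivity)
  simp only [hsnr]
  refine ⟨⟨a, ⟨haI, (hmax haI).mpr rfl⟩, fun b hb => (hmax hb.1).mp hb.2⟩, fun b hb hbmax => ?_⟩
  obtain rfl := (hmax hb).mp hbmax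
  refine ⟨ha.1, ha.2, ?_⟩
  rw [normalizedSNR_self_of_stationary hp.ne' hstat (hden hb).ne', mul_div_assoc',
    div_eq_iff hp.ne']
  linear_combination -hstat
end
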